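/- Let c, k > 0, let T̂ ∈ (0, ∞] and set τ̂ = min{1, T̂/2}. Suppose y : [0, T̂) → [0,∞) is continuous on [0, T̂) and continuously differentiable on (0, T̂), z : [0, T̂) → [0,∞) is locally integrable, and (i) y'(t) + c·y(t) ≤ z(t) for all t ∈ (0, T̂), (ii) ∫_t^{t+τ̂} z(s) ds ≤ k for all t ∈ (0, T̂ - τ̂). Then y(t) ≤ y(0) + 2k + k/c for all t ∈ (0, T̂). -/

import Mathlib

open MeasureTheory
open scoped ENNReal

/-!
Integrating `(exp (c t) y)' ≤ exp (c t) z` over a window of length `τ` gives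
`y t ≤ exp (-(c τ)) * y (t - τ) + k` for `τ ≤ t`, and `y t ≤ exp (-(c t)) * y 0 + k` for `t ≤ τ`.
Iterating, `y t` exceeds `exp (-(c t)) * y 0` by at most `k` times a sum of `⌈t / τ⌉` terms of the
geometric series of ratio `exp (-(c τ))`. If `τ = 1`, the whole series sums to at most `1 + 1 / c`;
otherwise `t < 2 * τ`, and two terms suffice.
-/

open Set Filter Topology

section LinearDifferentialInequality

variable {a b c k τ : ℝ} {y y' z : ℝ → ℝ}

theorem le_exp_mul_add_integral_of_deriv_right_add_mul_le (hc : 0 ≤ c) (hab : a ≤ b)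
    (hy : ContinuousOn y (Icc a b))
    (hderiv : ∀ t ∈ Ioo a b, HasDerivWithinAt y (y' t) (Ioi t) t)
    (hz : IntervalIntegrable z volume a b) (hz_nonneg : ∀ t ∈ Ioo a b, 0 ≤ z t)
    (hineq : ∀ t ∈ Ioo a b, y' t + c * y t ≤ z t) :
    y b ≤ Real.exp (-(c * (b - a))) * y a + ∫ s in a..b, z s := by
  have hweighted : Real.exp (-(c * (b - b))) * y b - Real.exp (-(c * (b - a))) * y a
      ≤ ∫ s in a..b, z s := by
    refine intervalIntegral.sub_le_integral_of_hasDeriv_right_of_le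
      (g := fun t => Real.exp (-(c * (b - t))) * y t)
      (g' := fun t => Real.exp (-(c * (b - t))) * (y' t + c * y t)) hab
      (ContinuousOn.mul (by fun_prop) hy) (fun t ht => ?_)
      ((intervalIntegrable_iff_integrableOn_Icc_of_le hab).1 hz) (fun t ht => ?_)
    · have hexp : HasDerivAt (fun t => Real.exp (-(c * (b - t))))
          (Real.exp (-(c * (b - t))) * -(c * -1)) t :=
        (((hasDerivAt_id t).const_sub b).const_mul c).fun_neg.exp
      exact (hexp.hasDerivWithinAt.mul (hderiv t ht)).congr_deriv (by ring)
    · have hexp_le : Real.exp (-(c * (b - t))) ≤ 1 :=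
        Real.exp_le_one_iff.2 (neg_nonpos.2 (mul_nonneg hc (sub_nonneg.2 ht.2.le)))
      calc Real.exp (-(c * (b - t))) * (y' t + c * y t)
          ≤ Real.exp (-(c * (b - t))) * z t := by gcongr; exact hineq t ht
        _ ≤ z t := mul_le_of_le_one_left (hz_nonneg t ht) hexp_le
  rw [sub_self, mul_zero, neg_zero, Real.exp_zero, one_mul] at hweighted
  linarith

theorem le_exp_mul_add_of_integral_trailing_window_le (hc : 0 ≤ c) (hτ : 0 ≤ τ)
    (hy : ContinuousOn y (Icc a b))
    (hderiv : ∀ t ∈ Ioo a b, HasDerivWithinAt y (y' t) (Ioi t) t)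
    (hz : IntervalIntegrable z volume a b) (hz_nonneg : ∀ t ∈ Ioo a b, 0 ≤ z t)
    (hineq : ∀ t ∈ Ioo a b, y' t + c * y t ≤ z t) {t : ℝ} (ht : t ∈ Icc a b)
    (hwindow : ∫ s in (max a (t - τ))..t, z s ≤ k) :
    y t ≤ Real.exp (-(c * (t - max a (t - τ)))) * y (max a (t - τ)) + k := by
  have has : a ≤ max a (t - τ) := le_max_left _ _
  have hst : max a (t - τ) ≤ t := max_le ht.1 (sub_le_self t hτ)
  have hsub : Ioo (max a (t - τ)) t ⊆ Ioo a b := Ioo_subset_Ioo has ht.2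
  have hz' : IntervalIntegrable z volume (max a (t - τ)) t := by
    refine hz.mono_set ?_
    rw [uIcc_of_le hst, uIcc_of_le (ht.1.trans ht.2)]
    exact Icc_subset_Icc has ht.2
  refine (le_exp_mul_add_integral_of_deriv_right_add_mul_le hc hst
    (hy.mono (Icc_subset_Icc has ht.2)) (fun u hu => hderiv u (hsub hu)) hz'
    (fun u hu => hz_nonneg u (hsub hu)) (fun u hu => hineq u (hsub hu))).trans ?_
  gcongr

theorem le_exp_mul_add_mul_geom_sum_of_delay_le (hτ : 0 ≤ τ) (hk : 0 ≤ k)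
    (hdelay : ∀ t ∈ Icc a b,
      y t ≤ Real.exp (-(c * (t - max a (t - τ)))) * y (max a (t - τ)) + k) (n : ℕ) :
    ∀ t ∈ Icc a b, t ≤ a + n * τ →
      y t ≤ Real.exp (-(c * (t - a))) * y a +
        k * ∑ i ∈ Finset.range n, Real.exp (-(c * τ)) ^ i := by
  induction n with
  | zero =>
    rintro t ⟨hat, -⟩ ht
    obtain rfl : t = a := le_antisymm (by simpa using ht) hat
    simp
  | succ n ih =>
    intro t htab ht
    have hstep := hdelay t htab
    rw [geom_sum_succ]
    rcases le_total (t - τ) a with hta | hta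
    · rw [max_eq_left hta] at hstep
      have hsum : 0 ≤ k * (Real.exp (-(c * τ)) *
          ∑ i ∈ Finset.range n, Real.exp (-(c * τ)) ^ i) := by positivity
      linarith
    · rw [max_eq_right hta, sub_sub_cancel] at hstep
      have hprev := ih (t - τ) ⟨hta, by linarith [htab.2]⟩ (by push_cast at ht; linarith)
      have hexp : Real.exp (-(c * (t - a))) =
          Real.exp (-(c * τ)) * Real.exp (-(c * (t - τ - a))) := by
        rw [← Real.exp_add]
        ring_nf
      calc y t ≤ Real.exp (-(c * τ)) * y (t - τ) + k := hstep
        _ ≤ Real.exp (-(c * τ)) * (Real.exp (-(c * (t - τ - a))) * y a +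
              k * ∑ i ∈ Finset.range n, Real.exp (-(c * τ)) ^ i) + k := by gcongr
        _ = Real.exp (-(c * (t - a))) * y a + k * (Real.exp (-(c * τ)) *
              ∑ i ∈ Finset.range n, Real.exp (-(c * τ)) ^ i + 1) := by
            rw [hexp]
            ring

end LinearDifferentialInequality

section Windows

variable {a b d k τ : ℝ} {z : ℝ → ℝ}

theorem intervalIntegral_le_of_eventually_le (hab : a < b) (hz : IntervalIntegrable z volume a b)
    (h : ∀ᶠ s in 𝓝[>] a, ∫ u in s..b, z u ≤ k) : ∫ u in a..b, z u ≤ k := by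
  have hcont : ContinuousWithinAt (fun s => ∫ u in s..b, z u) (Icc a b) a := by
    rw [← uIcc_of_le hab.le]
    exact intervalIntegral.continuousOn_primitive_interval_left
      ((intervalIntegrable_iff' (by finiteness)).1 hz) a left_mem_uIcc
  exact le_of_tendsto (hcont.mono_left
    (nhdsWithin_le_of_mem (mem_of_superset (Ioo_mem_nhdsGT hab) Ioo_subset_Icc_self))) h

theorem integral_trailing_window_le (hτ : 0 < τ) (had : a + τ < d)
    (hz : IntervalIntegrable z volume a d) (hz_nonneg : ∀ t ∈ Ioo a d, 0 ≤ z t)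
    (hwindow : ∀ s ∈ Ioo a (d - τ), ∫ u in s..(s + τ), z u ≤ k) :
    ∀ t ∈ Ico a d, ∫ u in (max a (t - τ))..t, z u ≤ k := by
  have integral_mono : ∀ {p q r s}, a ≤ p → p ≤ q → q ≤ r → r ≤ s → s < d →
      ∫ u in q..r, z u ≤ ∫ u in p..s, z u := by
    intro p q r s hap hpq hqr hrs hsd
    refine intervalIntegral.integral_mono_interval hpq hqr hrs
      (ae_restrict_of_forall_mem measurableSet_Ioc fun u hu =>
        hz_nonneg u ⟨hap.trans_lt hu.1, hu.2.trans_lt hsd⟩) (hz.mono_set ?_)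
    rw [uIcc_of_le (by linarith), uIcc_of_le (by linarith)]
    exact Icc_subset_Icc hap hsd.le
  rintro t ⟨hat, htd⟩
  rcases le_or_gt t (a + τ) with ht | ht
  · have hsub : uIcc a (a + τ) ⊆ uIcc a d := by
      rw [uIcc_of_le (by linarith), uIcc_of_le (by linarith)]
      exact Icc_subset_Icc_right had.le
    have first_window : ∫ u in a..(a + τ), z u ≤ k := by
      refine intervalIntegral_le_of_eventually_le (by linarith) (hz.mono_set hsub) ?_
      filter_upwards [Ioo_mem_nhdsGT (show a < a + τ by linarith),
        Ioo_mem_nhdsGT (show a < d - τ by linarith)] with s hs hsd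
      exact (integral_mono hs.1.le le_rfl hs.2.le (by linarith [hs.1])
        (by linarith [hsd.2])).trans (hwindow s hsd)
    rw [max_eq_left (by linarith)]
    exact (integral_mono le_rfl le_rfl hat ht had).trans first_window
  · rw [max_eq_right (by linarith)]
    simpa using hwindow (t - τ) ⟨by linarith, by linarith⟩

end Windows

theorem geom_sum_exp_neg_le {x : ℝ} (hx : 0 < x) (n : ℕ) :
    ∑ i ∈ Finset.range n, Real.exp (-x) ^ i ≤ 1 + 1 / x := by
  have hexp_lt : Real.exp (-x) < 1 := Real.exp_lt_one_iff.2 (neg_neg_of_pos hx)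
  have hexp_le : x / (1 + x) ≤ 1 - Real.exp (-x) :=
    calc x / (1 + x) = 1 - (1 + x)⁻¹ := by field_simp; ring
      _ ≤ 1 - Real.exp (-x) := by
        rw [Real.exp_neg]
        gcongr
        linarith [Real.add_one_le_exp x]
  calc ∑ i ∈ Finset.range n, Real.exp (-x) ^ i
      ≤ Real.exp (-x) ^ 0 / (1 - Real.exp (-x)) := by
        rw [Finset.range_eq_Ico]
        exact geom_sum_Ico_le_of_lt_one (Real.exp_pos (-x)).le hexp_lt
    _ ≤ 1 / (x / (1 + x)) := by
        rw [pow_zero]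
        exact one_div_le_one_div_of_le (by positivity) hexp_le
    _ = 1 + 1 / x := by field_simp; ring

/-- The length `min {1, T / 2}` of the windows over which `z` is integrated on `[0, T)`. The case
`T = ⊤` is separate because `ENNReal.toReal ⊤ = 0`. -/
noncomputable def windowLength (T : ℝ≥0∞) : ℝ :=
  if T = ⊤ then 1 else min 1 (T.toReal / 2)

namespace windowLength

variable {T : ℝ≥0∞} {c t : ℝ}

theorem pos (hT : 0 < T) : 0 < windowLength T := by
  unfold windowLength
  split_ifs with hTop
  · exact one_pos
  · exact lt_min one_pos (half_pos (ENNReal.toReal_pos hT.ne' hTop))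

theorem ofReal_lt (hT : 0 < T) : ENNReal.ofReal (windowLength T) < T := by
  by_cases hTop : T = ⊤
  · exact hTop ▸ ENNReal.ofReal_lt_top
  · rw [ENNReal.ofReal_lt_iff_lt_toReal (pos hT).le hTop, windowLength, if_neg hTop]
    exact (min_le_right _ _).trans_lt (half_lt_self (ENNReal.toReal_pos hT.ne' hTop))

theorem eq_one_or_lt_two_mul (ht0 : 0 ≤ t) (ht : ENNReal.ofReal t < T) :
    windowLength T = 1 ∨ t < 2 * windowLength T := by
  unfold windowLength
  split_ifs with hTop
  · exact Or.inl rfl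
  · have htT : t < T.toReal := (ENNReal.ofReal_lt_iff_lt_toReal ht0 hTop).1 ht
    exact (min_choice 1 (T.toReal / 2)).imp id fun h => by linarith

theorem exists_le_mul_and_geom_sum_le (hc : 0 < c) (ht0 : 0 ≤ t) (ht : ENNReal.ofReal t < T) :
    ∃ n : ℕ, t ≤ n * windowLength T ∧
      ∑ i ∈ Finset.range n, Real.exp (-(c * windowLength T)) ^ i ≤ 2 + 1 / c := by
  have hT : 0 < T := bot_le.trans_lt ht
  rcases eq_one_or_lt_two_mul ht0 ht with hone | htwo
  · obtain ⟨n, hn⟩ := exists_nat_ge t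
    refine ⟨n, by simpa [hone] using hn, ?_⟩
    rw [hone, mul_one]
    linarith [geom_sum_exp_neg_le hc n]
  · have hexp : Real.exp (-(c * windowLength T)) ≤ 1 :=
      Real.exp_le_one_iff.2 (neg_nonpos.2 (mul_pos hc (pos hT)).le)
    have hc' : 0 < 1 / c := one_div_pos.2 hc
    refine ⟨2, by exact_mod_cast htwo.le, ?_⟩
    rw [Finset.sum_range_succ, Finset.sum_range_one, pow_zero, pow_one]
    linarith

end windowLength

theorem stmt_4_general {c k : ℝ} (hc : 0 < c) (hk : 0 ≤ k) {T : ℝ≥0∞} {y y' z : ℝ → ℝ}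
    (hy_cont : ContinuousOn y {t : ℝ | 0 ≤ t ∧ ENNReal.ofReal t < T})
    (hy_deriv : ∀ t : ℝ, 0 < t → ENNReal.ofReal t < T → HasDerivWithinAt y (y' t) (Ioi t) t)
    (hz_nonneg : ∀ t : ℝ, 0 < t → ENNReal.ofReal t < T → 0 ≤ z t)
    (hz_int : ∀ t : ℝ, 0 ≤ t → ENNReal.ofReal t < T → IntervalIntegrable z volume 0 t)
    (hineq : ∀ t : ℝ, 0 < t → ENNReal.ofReal t < T → y' t + c * y t ≤ z t)
    (hzk : ∀ t : ℝ, 0 < t → ENNReal.ofReal t + ENNReal.ofReal (windowLength T) < T →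
      ∫ s in t..(t + windowLength T), z s ≤ k) {t : ℝ} (ht0 : 0 ≤ t) (ht : ENNReal.ofReal t < T) :
    y t ≤ Real.exp (-(c * t)) * y 0 + 2 * k + k / c := by
  have hT : 0 < T := bot_le.trans_lt ht
  have hτ : 0 < windowLength T := windowLength.pos hT
  have below : ∀ {r s : ℝ}, r ≤ s → ENNReal.ofReal s < T → ENNReal.ofReal r < T :=
    fun hrs hs => (ENNReal.ofReal_le_ofReal hrs).trans_lt hs
  obtain ⟨d, hd0, hmax, hdT⟩ := ENNReal.lt_iff_exists_real_btwn.1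
    (max_lt ht (windowLength.ofReal_lt hT))
  have htd : t < d := (ENNReal.ofReal_lt_ofReal_iff_of_nonneg ht0).1 (max_lt_iff.1 hmax).1
  have hτd : windowLength T < d :=
    (ENNReal.ofReal_lt_ofReal_iff_of_nonneg hτ.le).1 (max_lt_iff.1 hmax).2
  have hwindow := integral_trailing_window_le (k := k) hτ (by simpa using hτd)
    (hz_int d hd0 hdT) (fun s hs => hz_nonneg s hs.1 (below hs.2.le hdT)) fun s hs =>
      hzk s hs.1 (by
        rw [← ENNReal.ofReal_add hs.1.le hτ.le]
        exact below (by linarith [hs.2]) hdT)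
  obtain ⟨n, htn, hsum⟩ := windowLength.exists_le_mul_and_geom_sum_le hc ht0 ht
  have hdelay := fun u (hu : u ∈ Icc 0 t) =>
    le_exp_mul_add_of_integral_trailing_window_le hc.le hτ.le
      (hy_cont.mono fun s hs => ⟨hs.1, below hs.2 ht⟩)
      (fun s hs => hy_deriv s hs.1 (below hs.2.le ht)) (hz_int t ht0 ht)
      (fun s hs => hz_nonneg s hs.1 (below hs.2.le ht))
      (fun s hs => hineq s hs.1 (below hs.2.le ht)) hu (hwindow u ⟨hu.1, hu.2.trans_lt htd⟩)
  have hbound := le_exp_mul_add_mul_geom_sum_of_delay_le hτ.le hk hdelay n t ⟨ht0, le_rfl⟩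
    (by simpa using htn)
  calc y t ≤ Real.exp (-(c * t)) * y 0 +
        k * ∑ i ∈ Finset.range n, Real.exp (-(c * windowLength T)) ^ i := by simpa using hbound
    _ ≤ Real.exp (-(c * t)) * y 0 + k * (2 + 1 / c) := by gcongr
    _ = Real.exp (-(c * t)) * y 0 + 2 * k + k / c := by ring

theorem stmt_4 (c k : ℝ) (hc : 0 < c) (hk : 0 < k)
    (T : ℝ≥0∞) (hT : 0 < T)
    (τ : ℝ) (hτ : τ = if T = ⊤ then 1 else min 1 (T.toReal / 2))
    (y y' z : ℝ → ℝ)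
    (hy_nonneg : ∀ t : ℝ, 0 ≤ t → ENNReal.ofReal t < T → 0 ≤ y t)
    (hy_cont : ContinuousOn y {t : ℝ | 0 ≤ t ∧ ENNReal.ofReal t < T})
    (hy_deriv : ∀ t : ℝ, 0 < t → ENNReal.ofReal t < T → HasDerivAt y (y' t) t)
    (hy'_cont : ContinuousOn y' {t : ℝ | 0 < t ∧ ENNReal.ofReal t < T})
    (hz_nonneg : ∀ t : ℝ, 0 ≤ t → ENNReal.ofReal t < T → 0 ≤ z t)
    (hz_int : ∀ t₁ t₂ : ℝ, 0 ≤ t₁ → t₁ ≤ t₂ → ENNReal.ofReal t₂ < T →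
      IntervalIntegrable z volume t₁ t₂)
    (hineq : ∀ t : ℝ, 0 < t → ENNReal.ofReal t < T → y' t + c * y t ≤ z t)
    (hzk : ∀ t : ℝ, 0 < t → ENNReal.ofReal t + ENNReal.ofReal τ < T →
      ∫ s in t..(t + τ), z s ≤ k) :
    ∀ t : ℝ, 0 < t → ENNReal.ofReal t < T → y t ≤ y 0 + 2 * k + k / c := by
  subst hτ
  intro t ht htT
  have hy0 : 0 ≤ y 0 := hy_nonneg 0 le_rfl (by simpa using hT)
  have hexp : Real.exp (-(c * t)) ≤ 1 := Real.exp_le_one_iff.2 (neg_nonpos.2 (by positivity))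
  linarith [stmt_4_general hc hk.le hy_cont (fun t h0 h => (hy_deriv t h0 h).hasDerivWithinAt)
    (fun t h0 => hz_nonneg t h0.le) (fun t h0 => hz_int 0 t le_rfl h0) hineq hzk ht.le htT,
    mul_le_of_le_one_left hy0 hexp]
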